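/- Let n ≥ 2 and let E₁,…,Eₙ be Hilbert spaces. Then, for any Banach space F, every continuous n-linear operator T : E₁ × ⋯ × Eₙ → F has cotype 2/n with constant at most ‖T‖, i.e., for all k ∈ ℕ and all x_j^{(i)} ∈ E_i, (∑_{j=1}^k ‖T(x_j^{(1)},…,x_j^{(n)})‖^{2/n})^{n/2} ≤ ‖T‖ · ∏_{i=1}^n ‖(x_j^{(i)})_{j=1}^k‖_Rad. -/

import Mathlib

/-!
In a Hilbert space the Rademacher average of `y` is exactly `(∑ ‖y j‖ ^ 2) ^ (1 / 2)`: by the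
parallelogram law, averaging `‖z ± y j‖ ^ 2` over the sign adds `‖y j‖ ^ 2` to `‖z‖ ^ 2`
(`sum_signs_norm_sq`, `radNorm_eq_sqrt`). Since
`‖T (x j)‖ ≤ ‖T‖ * ∏ i, ‖x i j‖`, the claim reduces to Hölder's inequality for `n` sequences in `ℓ²`
with target `ℓ^{2/n}`, which is the generalized Cauchy-Schwarz inequality
`∑ j, ∏ i, a i j ^ (1 / n) ≤ ∏ i, (∑ j, a i j) ^ (1 / n)` for `a i j = ‖x i j‖ ^ 2`
(`sum_prod_rpow_le`).
-/


open scoped BigOperators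

noncomputable def radNorm {F : Type*} [NormedAddCommGroup F] {k : ℕ} (y : Fin k → F) : ℝ :=
  Real.sqrt (((2 : ℝ) ^ k)⁻¹ * ∑ ε : Fin k → Bool, ‖∑ j, (if ε j then y j else -y j)‖ ^ 2)

section Defs

variable {𝕜 : Type*} [RCLike 𝕜] {n : ℕ} {E : Fin n → Type*} {F : Type*}
  [∀ i, NormedAddCommGroup (E i)] [∀ i, NormedSpace 𝕜 (E i)]
  [NormedAddCommGroup F] [NormedSpace 𝕜 F]

/-- The `n`-linear operator `T` has type `(p 0, …, p (n-1))` with constant `C`. -/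
def HasTypeWith (T : ContinuousMultilinearMap 𝕜 E F) (p : Fin n → ℝ) (C : ℝ) : Prop :=
  ∀ (k : ℕ) (x : ∀ i, Fin k → E i),
    radNorm (fun j => T (fun i => x i j)) ≤ C * ∏ i, (∑ j, ‖x i j‖ ^ p i) ^ (1 / p i)

/-- The `n`-linear operator `T` has type `(p 0, …, p (n-1))`. -/
def HasType (T : ContinuousMultilinearMap 𝕜 E F) (p : Fin n → ℝ) : Prop :=
  ∃ C > 0, HasTypeWith T p C

/-- The `n`-linear operator `T` has cotype `q` with constant `M`. -/
def HasCotypeWith (T : ContinuousMultilinearMap 𝕜 E F) (q M : ℝ) : Prop :=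
  ∀ (k : ℕ) (x : ∀ i, Fin k → E i),
    (∑ j, ‖T (fun i => x i j)‖ ^ q) ^ (1 / q) ≤ M * ∏ i, radNorm (x i)

/-- The `n`-linear operator `T` has cotype `q`. -/
def HasCotype (T : ContinuousMultilinearMap 𝕜 E F) (q : ℝ) : Prop :=
  ∃ M > 0, HasCotypeWith T q M

end Defs

section LinDefs

variable {𝕜 : Type*} [RCLike 𝕜] {E F : Type*}
  [NormedAddCommGroup E] [NormedSpace 𝕜 E] [NormedAddCommGroup F] [NormedSpace 𝕜 F]

/-- The linear operator `u` has type `p` with constant `C`. -/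
def LinHasTypeWith (u : E →L[𝕜] F) (p C : ℝ) : Prop :=
  ∀ (k : ℕ) (x : Fin k → E),
    radNorm (fun j => u (x j)) ≤ C * (∑ j, ‖x j‖ ^ p) ^ (1 / p)

/-- The linear operator `u` has type `p`. -/
def LinHasType (u : E →L[𝕜] F) (p : ℝ) : Prop := ∃ C > 0, LinHasTypeWith u p C

/-- The linear operator `u` has cotype `q` with constant `C`. -/
def LinHasCotypeWith (u : E →L[𝕜] F) (q C : ℝ) : Prop :=
  ∀ (k : ℕ) (x : Fin k → E),
    (∑ j, ‖u (x j)‖ ^ q) ^ (1 / q) ≤ C * radNorm x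

/-- The linear operator `u` has cotype `q`. -/
def LinHasCotype (u : E →L[𝕜] F) (q : ℝ) : Prop := ∃ C > 0, LinHasCotypeWith u q C

end LinDefs

/-- Orthogonality of random signs. The shift `z` makes the induction on `k` go through: the signed
first vector is absorbed into it. -/
lemma sum_signs_norm_sq (𝕜 : Type*) [RCLike 𝕜] {H : Type*} [NormedAddCommGroup H]
    [InnerProductSpace 𝕜 H] : ∀ (k : ℕ) (y : Fin k → H) (z : H),
      ∑ ε : Fin k → Bool, ‖z + ∑ j, (if ε j then y j else -y j)‖ ^ 2
        = 2 ^ k * (‖z‖ ^ 2 + ∑ j, ‖y j‖ ^ 2)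
  | 0, y, z => by simp
  | k + 1, y, z => by
    rw [← (Fin.consEquiv (fun _ : Fin (k + 1) => Bool)).sum_comp, Fintype.sum_prod_type]
    have hp := parallelogram_law_with_norm 𝕜 z (y 0)
    have h1 := sum_signs_norm_sq 𝕜 k (fun j => y j.succ) (z + y 0)
    have h2 := sum_signs_norm_sq 𝕜 k (fun j => y j.succ) (z + -y 0)
    simp only [Fintype.sum_bool, Fin.consEquiv_apply, Fin.sum_univ_succ, Fin.cons_zero,
      Fin.cons_succ, if_true, Bool.false_eq_true, if_false, ← add_assoc]
    rw [h1, h2, ← sub_eq_add_neg, pow_succ]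
    linear_combination (2 : ℝ) ^ k * hp

lemma radNorm_eq_sqrt (𝕜 : Type*) [RCLike 𝕜] {H : Type*} [NormedAddCommGroup H]
    [InnerProductSpace 𝕜 H] {k : ℕ} (y : Fin k → H) :
    radNorm y = Real.sqrt (∑ j, ‖y j‖ ^ 2) := by
  have h := sum_signs_norm_sq 𝕜 k y 0
  simp only [zero_add, norm_zero, ne_eq, OfNat.ofNat_ne_zero, not_false_eq_true, zero_pow] at h
  rw [radNorm, h, inv_mul_cancel_left₀ (by positivity)]

/-- Hölder's inequality for `n` nonnegative sequences with equal exponents, obtained by normalizing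
each sequence to total mass one and applying the weighted AM-GM inequality termwise. -/
lemma sum_prod_rpow_le {n k : ℕ} (hn : n ≠ 0) (a : Fin n → Fin k → ℝ) (ha : ∀ i j, 0 ≤ a i j) :
    ∑ j, ∏ i, a i j ^ (1 / (n : ℝ)) ≤ ∏ i, (∑ j, a i j) ^ (1 / (n : ℝ)) := by
  have hn' : (n : ℝ) ≠ 0 := Nat.cast_ne_zero.mpr hn
  have hA : ∀ i, 0 ≤ ∑ j, a i j := fun i => Finset.sum_nonneg fun j _ => ha i j
  by_cases h0 : ∃ i, ∑ j, a i j = 0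
  · obtain ⟨i, hi⟩ := h0
    have hz : ∀ j, a i j = 0 := fun j =>
      (Finset.sum_eq_zero_iff_of_nonneg fun j _ => ha i j).1 hi j (Finset.mem_univ j)
    have hs : ∑ j, ∏ i, a i j ^ (1 / (n : ℝ)) = 0 :=
      Finset.sum_eq_zero fun j _ => Finset.prod_eq_zero (Finset.mem_univ i) (by
        rw [hz j, Real.zero_rpow (one_div_ne_zero hn')])
    rw [hs]
    exact Finset.prod_nonneg fun i _ => Real.rpow_nonneg (hA i) _
  · push Not at h0
    have hP : 0 < ∏ i, (∑ j, a i j) ^ (1 / (n : ℝ)) :=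
      Finset.prod_pos fun i _ => Real.rpow_pos_of_pos ((hA i).lt_of_ne' (h0 i)) _
    rw [← div_le_one hP, Finset.sum_div]
    calc ∑ j, (∏ i, a i j ^ (1 / (n : ℝ))) / ∏ i, (∑ j, a i j) ^ (1 / (n : ℝ))
        = ∑ j, ∏ i, (a i j / ∑ j, a i j) ^ (1 / (n : ℝ)) := by
          refine Finset.sum_congr rfl fun j _ => ?_
          rw [← Finset.prod_div_distrib]
          exact Finset.prod_congr rfl fun i _ => (Real.div_rpow (ha i j) (hA i) _).symm
      _ ≤ ∑ j, ∑ i, 1 / (n : ℝ) * (a i j / ∑ j, a i j) :=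
          Finset.sum_le_sum fun j _ => Real.geom_mean_le_arith_mean_weighted _ _ _
            (fun _ _ => by positivity) (by simp [hn']) fun i _ => div_nonneg (ha i j) (hA i)
      _ = 1 := by
          rw [Finset.sum_comm]
          simp_rw [← Finset.mul_sum, ← Finset.sum_div, div_self (h0 _)]
          simp [hn']

/-- If `n ≥ 2` and `E₁,…,Eₙ` are Hilbert spaces then, for any Banach space `F`, every
continuous `n`-linear operator `T : E₁ × ⋯ × Eₙ → F` has cotype `2/n` with constant at
most `‖T‖`. -/
theorem hilbert_cotype_two_div_n
    {𝕜 : Type*} [RCLike 𝕜] {n : ℕ} {E : Fin n → Type*} {F : Type*}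
    [∀ i, NormedAddCommGroup (E i)] [∀ i, InnerProductSpace 𝕜 (E i)]
    [∀ i, CompleteSpace (E i)]
    [NormedAddCommGroup F] [NormedSpace 𝕜 F] [CompleteSpace F]
    (hn : 2 ≤ n)
    (T : ContinuousMultilinearMap 𝕜 E F) :
    HasCotypeWith T (2 / (n : ℝ)) ‖T‖ := by
  intro k x
  have hn0 : n ≠ 0 := by omega
  have hn' : (0 : ℝ) < n := Nat.cast_pos.mpr (by omega)
  have hq : (0 : ℝ) < 2 / n := by positivity
  have hS : ∀ i, 0 ≤ ∑ j, ‖x i j‖ ^ 2 := fun i => by positivity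
  have hterm : ∀ j, ‖T (fun i => x i j)‖ ^ (2 / (n : ℝ))
      ≤ ‖T‖ ^ (2 / (n : ℝ)) * ∏ i, (‖x i j‖ ^ 2) ^ (1 / (n : ℝ)) := fun j => by
    calc ‖T (fun i => x i j)‖ ^ (2 / (n : ℝ))
        ≤ (‖T‖ * ∏ i, ‖x i j‖) ^ (2 / (n : ℝ)) :=
          Real.rpow_le_rpow (norm_nonneg _) (T.le_opNorm _) hq.le
      _ = _ := by
          rw [Real.mul_rpow (norm_nonneg _) (by positivity),
            ← Real.finsetProd_rpow _ _ fun i _ => norm_nonneg _]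
          congr 1
          refine Finset.prod_congr rfl fun i _ => ?_
          rw [← Real.rpow_natCast_mul (norm_nonneg _)]
          congr 1
          push_cast
          ring
  have hsum : ∑ j, ‖T (fun i => x i j)‖ ^ (2 / (n : ℝ))
      ≤ ‖T‖ ^ (2 / (n : ℝ)) * ∏ i, (∑ j, ‖x i j‖ ^ 2) ^ (1 / (n : ℝ)) := by
    refine (Finset.sum_le_sum fun j _ => hterm j).trans ?_
    rw [← Finset.mul_sum]
    exact mul_le_mul_of_nonneg_left
      (sum_prod_rpow_le hn0 (fun i j => ‖x i j‖ ^ 2) fun _ _ => by positivity) (by positivity)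
  have hprod : ∏ i, radNorm (x i) ^ (2 / (n : ℝ))
      = ∏ i, (∑ j, ‖x i j‖ ^ 2) ^ (1 / (n : ℝ)) := by
    refine Finset.prod_congr rfl fun i _ => ?_
    rw [radNorm_eq_sqrt 𝕜 (x i), Real.sqrt_eq_rpow, ← Real.rpow_mul (hS i)]
    congr 1
    ring
  have hR : ∀ i, 0 ≤ radNorm (x i) := fun i => Real.sqrt_nonneg _
  have hR' : 0 ≤ ∏ i, radNorm (x i) := Finset.prod_nonneg fun i _ => hR i
  -- Undo the outer power `1 / (2 / n)` and compare the `2 / n`-th powers of both sides.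
  rw [one_div, Real.rpow_inv_le_iff_of_pos (by positivity) (by positivity) hq,
    Real.mul_rpow (norm_nonneg _) hR', ← Real.finsetProd_rpow _ _ fun i _ => hR i, hprod]
  exact hsum
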